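/- arXiv:1311.3631 — 2 statements merged into one kernel-verified Lean document; each statement's English description precedes it below -/
import Mathlib

section
/- Translation correctness for the pattern 'Ψ1 during [a,b] raises Ψ2': let π be a finite timed trace, Ψ1, Ψ2 state predicates on S, and 0 ≤ a ≤ b. Assume there is an index p with t_p = t_0 + a and an index q with t_q = t_0 + b. Then π ⊨ (X_{≤a} G_{≤b−a} Ψ1) ⟹ X_{≤b} Ψ2 if and only if the following implication holds: if Ψ1(s_i) for every index i with t_0 + a ≤ t_i ≤ t_0 + b, then Ψ2(s_q). -/
/-- A finite timed trace: states `s 0, …, s n` with strictly increasing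
time stamps `t 0 < t 1 < ⋯ < t n`. -/
structure TTrace (S : Type*) where
  n : ℕ
  s : ℕ → S
  t : ℕ → ℝ
  mono : ∀ i, i < n → t i < t (i + 1)

/-- The suffix `π^i` of a timed trace. -/
def TTrace.suffix {S : Type*} (π : TTrace S) (i : ℕ) : TTrace S where
  n := π.n - i
  s := fun j => π.s (i + j)
  t := fun j => π.t (i + j)
  mono := fun j hj => π.mono (i + j) (by omega)

/-- A trace property is a predicate on timed traces. -/
abbrev TraceProp (S : Type*) := TTrace S → Prop

/-- A state predicate regarded as a trace property: it holds on `π` iff it holds in `s 0`. -/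
def statePred {S : Type*} (Ψ : S → Prop) : TraceProp S := fun π => Ψ (π.s 0)

/-- `π ⊨ G_{≤k} Φ` iff `π^i ⊨ Φ` for every index `i` with `t i ≤ t 0 + k`. -/
def Gle {S : Type*} (k : ℝ) (Φ : TraceProp S) : TraceProp S := fun π =>
  ∀ i, i ≤ π.n → π.t i ≤ π.t 0 + k → Φ (π.suffix i)

/-- `π ⊨ F_{≤k} Φ` iff `π^i ⊨ Φ` for some index `i` with `t i ≤ t 0 + k`. -/
def Fle {S : Type*} (k : ℝ) (Φ : TraceProp S) : TraceProp S := fun π =>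
  ∃ i, i ≤ π.n ∧ π.t i ≤ π.t 0 + k ∧ Φ (π.suffix i)

/-- `π ⊨ X_{≤k} Φ` iff `π^m ⊨ Φ` for `m` the largest index with `t m ≤ t 0 + k`. -/
noncomputable def Xle {S : Type*} (k : ℝ) (Φ : TraceProp S) : TraceProp S := fun π =>
  Φ (π.suffix (@Nat.findGreatest (fun i => π.t i ≤ π.t 0 + k) (Classical.decPred _) π.n))

def pImp {S : Type*} (Φ1 Φ2 : TraceProp S) : TraceProp S := fun π => Φ1 π → Φ2 π
def pNot {S : Type*} (Φ : TraceProp S) : TraceProp S := fun π => ¬ Φ π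
def pAnd {S : Type*} (Φ1 Φ2 : TraceProp S) : TraceProp S := fun π => Φ1 π ∧ Φ2 π
def pOr {S : Type*} (Φ1 Φ2 : TraceProp S) : TraceProp S := fun π => Φ1 π ∨ Φ2 π
def pTrue {S : Type*} : TraceProp S := fun _ => True
def pFalse {S : Type*} : TraceProp S := fun _ => False

theorem TTrace.lt_of_lt' {S : Type*} (π : TTrace S) (i j : ℕ) (hij : i < j) (hj : j ≤ π.n) :
    π.t i < π.t j := by
  induction j with
  | zero => omega
  | succ k ih =>
    have h1 := π.mono k (by omega)
    rcases Nat.lt_or_ge i k with h | h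
    · exact (ih h (by omega)).trans h1
    · have : i = k := by omega
      subst this
      exact h1

theorem TTrace.findGreatest_eq' {S : Type*} (π : TTrace S) (k : ℝ) (p : ℕ) (hp : p ≤ π.n)
    (hpt : π.t p = π.t 0 + k) :
    @Nat.findGreatest (fun i => π.t i ≤ π.t 0 + k) (Classical.decPred _) π.n = p := by
  classical
  rw [Nat.findGreatest_eq_iff]
  refine ⟨hp, fun _ => hpt.le, fun j hj hjn h => ?_⟩
  have := π.lt_of_lt' p j hj hjn
  linarith

/-- translation correctness for 'Ψ1 during [a,b] raises Ψ2':
assuming some index `p` has `t p = t 0 + a` and index `q` has `t q = t 0 + b`,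
`π ⊨ (X_{≤a} G_{≤b−a} Ψ1) ⟹ X_{≤b} Ψ2` iff: whenever `Ψ1 (s i)` holds for every
index `i` with `t 0 + a ≤ t i ≤ t 0 + b`, then `Ψ2 (s q)`. -/
theorem pattern_during_raises {S : Type*} (π : TTrace S)
    (Ψ1 Ψ2 : S → Prop) (a b : ℝ) (ha : 0 ≤ a) (hab : a ≤ b)
    (hp : ∃ p, p ≤ π.n ∧ π.t p = π.t 0 + a)
    (q : ℕ) (hq : q ≤ π.n) (hqt : π.t q = π.t 0 + b) :
    pImp (Xle a (Gle (b - a) (statePred Ψ1))) (Xle b (statePred Ψ2)) π ↔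
      ((∀ i, i ≤ π.n → π.t 0 + a ≤ π.t i → π.t i ≤ π.t 0 + b → Ψ1 (π.s i)) →
        Ψ2 (π.s q)) := by
  obtain ⟨p, hpn, hpt⟩ := hp
  unfold pImp Xle
  rw [π.findGreatest_eq' a p hpn hpt, π.findGreatest_eq' b q hq hqt]
  have key : Gle (b - a) (statePred Ψ1) (π.suffix p) ↔
      (∀ i, i ≤ π.n → π.t 0 + a ≤ π.t i → π.t i ≤ π.t 0 + b → Ψ1 (π.s i)) := by
    simp only [Gle, statePred, TTrace.suffix, Nat.add_zero]
    constructor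
    · intro h i hi h1 h2
      have hpi : p ≤ i := by
        by_contra hlt
        have := π.lt_of_lt' i p (by omega) hpn
        linarith
      obtain ⟨d, rfl⟩ := Nat.exists_eq_add_of_le hpi
      exact h d (by omega) (by linarith)
    · intro h i hi h2
      refine h (p + i) (by omega) ?_ (by linarith)
      rcases Nat.eq_zero_or_pos i with h0 | h0
      · subst h0
        exact hpt.ge
      · have := π.lt_of_lt' p (p + i) (by omega) (by omega)
        linarith
  rw [key]
  simp only [statePred, TTrace.suffix, Nat.add_zero]
end

section
/- Translation correctness for the sliding-interval pattern 'whenever Ψ1 occurs, Ψ2 holds during following [a,b]': let π be a finite timed trace, Ψ1, Ψ2 state predicates on S, and 0 ≤ a ≤ b ≤ k. Assume that for every index i with t_i ≤ t_0 + (k − b) there is an index m with t_m = t_i + a. Then π ⊨ G_{≤k−b}(Ψ1 ⟹ X_{≤a} G_{≤b−a} Ψ2) if and only if for every index i with t_i ≤ t_0 + (k − b) at which Ψ1(s_i) holds, every index j with t_i + a ≤ t_j ≤ t_i + b satisfies Ψ2(s_j). -/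
theorem TTrace.t_lt {S : Type*} (π : TTrace S) {i j : ℕ} (hij : i < j) (hj : j ≤ π.n) :
    π.t i < π.t j := by
  induction j, hij using Nat.le_induction with
  | base => exact π.mono i (by omega)
  | succ j hij ih => exact (ih (by omega)).trans (π.mono j (by omega))

theorem TTrace.le_of_t_le {S : Type*} (π : TTrace S) {i j : ℕ} (hi : i ≤ π.n)
    (h : π.t i ≤ π.t j) : i ≤ j := by
  by_contra hc
  exact absurd (π.t_lt (not_le.mp hc) hi) (not_lt.mpr h)

theorem xle_iff {S : Type*} (π : TTrace S) (a : ℝ) (Φ : TraceProp S) (i d : ℕ)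
    (hd : i + d ≤ π.n) (h : π.t (i + d) = π.t i + a) :
    Xle a Φ (π.suffix i) ↔ Φ ((π.suffix i).suffix d) := by
  unfold Xle
  have : @Nat.findGreatest (fun j => (π.suffix i).t j ≤ (π.suffix i).t 0 + a)
      (Classical.decPred _) (π.suffix i).n = d := by
    rw [Nat.findGreatest_eq_iff]
    simp only [TTrace.suffix, Nat.add_zero]
    refine ⟨by omega, fun _ => h.le, fun l hl hln hc => ?_⟩
    have := π.t_lt (i := i + d) (j := i + l) (by omega) (by omega)
    linarith
  rw [this]

/-- translation correctness for the sliding-interval pattern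
'whenever Ψ1 occurs, Ψ2 holds during following [a,b]':
`π ⊨ G_{≤k−b}(Ψ1 ⟹ X_{≤a} G_{≤b−a} Ψ2)` iff for every index `i` with
`t i ≤ t 0 + (k − b)` at which `Ψ1 (s i)` holds, every index `j` with
`t i + a ≤ t j ≤ t i + b` satisfies `Ψ2 (s j)`. -/
theorem pattern_sliding_holds_during {S : Type*} (π : TTrace S)
    (Ψ1 Ψ2 : S → Prop) (a b k : ℝ) (ha : 0 ≤ a) (hab : a ≤ b) (hbk : b ≤ k)
    (hm : ∀ i, i ≤ π.n → π.t i ≤ π.t 0 + (k - b) →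
            ∃ m, m ≤ π.n ∧ π.t m = π.t i + a) :
    Gle (k - b) (pImp (statePred Ψ1) (Xle a (Gle (b - a) (statePred Ψ2)))) π ↔
      ∀ i, i ≤ π.n → π.t i ≤ π.t 0 + (k - b) → Ψ1 (π.s i) →
        ∀ j, j ≤ π.n → π.t i + a ≤ π.t j → π.t j ≤ π.t i + b → Ψ2 (π.s j) := by
  refine forall_congr' fun i => forall_congr' fun hi => forall_congr' fun hik => ?_
  obtain ⟨m, hmn, hma⟩ := hm i hi hik
  have him : i ≤ m := π.le_of_t_le hi (by linarith)
  obtain ⟨d, rfl⟩ := Nat.exists_eq_add_of_le him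
  unfold pImp
  rw [xle_iff π a _ i d hmn hma]
  simp only [Gle, statePred, TTrace.suffix, Nat.add_zero]
  refine forall_congr' fun _ => ⟨fun H j hj h1 h2 => ?_, fun H l hl h => ?_⟩
  · have hle : i + d ≤ j := π.le_of_t_le hmn (by linarith)
    obtain ⟨l, rfl⟩ := Nat.exists_eq_add_of_le hle
    have := H l (by omega) (by rw [← add_assoc]; linarith)
    rwa [← add_assoc] at this
  · refine H _ (by omega) ?_ (by linarith)
    rcases Nat.eq_zero_or_pos l with rfl | hl0
    · simp [hma]
    · have := π.t_lt (i := i + d) (j := i + (d + l)) (by omega) (by omega)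
      linarith
end
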